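/- For every F ∈ 𝒜 and K ∈ 𝒜⁰: P^d_*(F|K) = 1 if F ∩ K = K; if F ∩ K ≠ K and P^d(K) > 0, then P^d_*(F|K) = P^d(F ∩ K)/P^d(K); if F ∩ K ≠ K and P^d(K) = 0, then, with I₂ := {i ∈ I : H_i ∩ F ∩ K ≠ ∅ and H_i ∩ F^c ∩ K ≠ ∅} and I₃ := {i ∈ I : H_i ∩ F ∩ K = ∅ and H_i ∩ F^c ∩ K ≠ ∅}, P^d_*(F|K) = min_{i∈I₂} σ(F∩K|H_i)/σ(K|H_i) when I₂ ≠ ∅, I₃ = ∅, I₂ is finite and σ(K|H_i) > 0 for all i ∈ I₂, and P^d_*(F|K) = 0 in every other case. -/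

import Mathlib

/-!
Full conditional probabilities are produced by layering. Given a well-ordered family of finitely
additive probabilities such that every nonempty event is charged by some member, conditioning an
event by the first member that charges it gives a full conditional probability
(`exists_fcp_of_family`, `IsFCP.exists_prepend`). The family `σ (·|H i)`, `i ∈ ι`, followed by all
point masses, extends the strategy. Putting `P^d` on top gives an element of `𝒫^d`
(`exists_mem_PdSet`), because `P^d` is finitely additive (`jointPd_isFAP`) and
`P^d (F ∩ H i) = σ (F|H i) P^d (H i)` (`jointPd_inter`). Additivity of `P^d` comes from additivity
of the Stieltjes integral on `𝒜L`-continuous functions, which have arbitrarily small oscillation on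
the cells of suitable finite partitions (`exists_small_osc`, `lowerSInt_add`).

If `K ⊆ F` or `P^d (K) > 0`, the value at `F|K` is the same for all elements of `𝒫^d`. If
`P^d (K) = 0`, the layers just below `P^d` are free. Choosing `σ (·|H i)` with `σ (K|H i) > 0`
realises the ratio `σ (F ∩ K|H i) / σ (K|H i)`. If `σ (K|H i) = 0` and `H i` meets `Fᶜ ∩ K`, a point
mass there, inserted right after `σ (·|H i)`, realises `0`. If `Fᶜ ∩ K` meets infinitely many `H i`,
an ultrafilter containing `Fᶜ ∩ K` and avoiding all `H i` realises `0`. In the only remaining case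
`Fᶜ ∩ K` is covered by the finitely many cells with index in `I₂`. On each of them the
conditional probability of `F` given `H i ∩ K` is forced to be the ratio, so the smallest ratio is
a lower bound (`le_of_mem_PdSet`).
-/



open Set

open scoped Classical

variable {Ω : Type*}

/-- A field of sets on `Ω`: contains `univ`, closed under complements and finite unions. -/
def IsSetField (𝒜 : Set (Set Ω)) : Prop :=
  Set.univ ∈ 𝒜 ∧ (∀ A ∈ 𝒜, Aᶜ ∈ 𝒜) ∧ ∀ A ∈ 𝒜, ∀ B ∈ 𝒜, A ∪ B ∈ 𝒜

/-- A finitely additive probability on the field `𝒜`. -/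
def IsFAP (𝒜 : Set (Set Ω)) (P : Set Ω → ℝ) : Prop :=
  (∀ A ∈ 𝒜, 0 ≤ P A ∧ P A ≤ 1) ∧ P Set.univ = 1 ∧
    ∀ A ∈ 𝒜, ∀ B ∈ 𝒜, Disjoint A B → P (A ∪ B) = P A + P B

/-- A partition of `Ω` into nonempty pairwise disjoint pieces. -/
def IsPartition {ι : Type*} (H : ι → Set Ω) : Prop :=
  (∀ i, (H i).Nonempty) ∧ (Pairwise fun i j => Disjoint (H i) (H j)) ∧
    (⋃ i, H i) = Set.univ

/-- A field containing every member of the partition `H` and whose members are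
unions of members of the partition. -/
def IsFieldOver {ι : Type*} (H : ι → Set Ω) (𝒜L : Set (Set Ω)) : Prop :=
  IsSetField 𝒜L ∧ (∀ i, H i ∈ 𝒜L) ∧ ∀ A ∈ 𝒜L, ∃ S : Set ι, A = ⋃ i ∈ S, H i

/-- A field containing `𝒜L ∪ 𝒜E` whose members are unions of the atoms `H i ∩ E j`. -/
def IsJointField {ι κ : Type*} (H : ι → Set Ω) (E : κ → Set Ω)
    (𝒜L 𝒜E 𝒜 : Set (Set Ω)) : Prop :=
  IsSetField 𝒜 ∧ 𝒜L ⊆ 𝒜 ∧ 𝒜E ⊆ 𝒜 ∧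
    ∀ A ∈ 𝒜, ∃ S : Set (ι × κ), A = ⋃ p ∈ S, H p.1 ∩ E p.2

/-- A strategy on `𝒜 × ℒ`: each `σ (·|H i)` is a finitely additive probability on `𝒜`
equal to `1` on events implied by `H i`. -/
def IsStrategy {ι : Type*} (𝒜 : Set (Set Ω)) (H : ι → Set Ω) (σ : Set Ω → ι → ℝ) : Prop :=
  ∀ i, IsFAP 𝒜 (fun F => σ F i) ∧ ∀ F ∈ 𝒜, H i ⊆ F → σ F i = 1

/-- A full conditional probability on the field `𝒜` (conditions (C1), (C2), (C3)). -/
def IsFCP (𝒜 : Set (Set Ω)) (P : Set Ω → Set Ω → ℝ) : Prop :=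
  (∀ E ∈ 𝒜, ∀ K ∈ 𝒜, K.Nonempty → P E K = P (E ∩ K) K) ∧
  (∀ K ∈ 𝒜, K.Nonempty → IsFAP 𝒜 fun E => P E K) ∧
  ∀ E ∈ 𝒜, ∀ F ∈ 𝒜, ∀ K ∈ 𝒜, K.Nonempty → (E ∩ K).Nonempty →
    P (E ∩ F) K = P E K * P F (E ∩ K)

/-- `P` extends the prior `π` on `𝒜L` and the strategy `σ` on `𝒜 × ℒ`. -/
def ExtendsPriorStrategy {ι : Type*} (𝒜 𝒜L : Set (Set Ω)) (H : ι → Set Ω)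
    (π : Set Ω → ℝ) (σ : Set Ω → ι → ℝ) (P : Set Ω → Set Ω → ℝ) : Prop :=
  (∀ B ∈ 𝒜L, P B Set.univ = π B) ∧ ∀ F ∈ 𝒜, ∀ i, P F (H i) = σ F i

/-- The set `𝒫` of full conditional probabilities on `𝒜` extending `{π, σ}`. -/
def FCPSet {ι : Type*} (𝒜 𝒜L : Set (Set Ω)) (H : ι → Set Ω)
    (π : Set Ω → ℝ) (σ : Set Ω → ι → ℝ) : Set (Set Ω → Set Ω → ℝ) :=
  {P | IsFCP 𝒜 P ∧ ExtendsPriorStrategy 𝒜 𝒜L H π σ P}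

/-- Lower envelope of a set of conditional probabilities at `F|K`. -/
noncomputable def lowEnv (Ps : Set (Set Ω → Set Ω → ℝ)) (F K : Set Ω) : ℝ :=
  sInf ((fun P => P F K) '' Ps)

/-- Upper envelope of a set of conditional probabilities at `F|K`. -/
noncomputable def upEnv (Ps : Set (Set Ω → Set Ω → ℝ)) (F K : Set Ω) : ℝ :=
  sSup ((fun P => P F K) '' Ps)

/-- A finite partition of `Ω` contained in `𝒜L`. -/
def IsFinPart (𝒜L : Set (Set Ω)) (T : Finset (Set Ω)) : Prop :=
  (↑T : Set (Set Ω)) ⊆ 𝒜L ∧ (∀ A ∈ T, (A : Set Ω).Nonempty) ∧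
    (∀ A ∈ T, ∀ B ∈ T, A ≠ B → Disjoint A B) ∧ ⋃₀ (↑T : Set (Set Ω)) = Set.univ

/-- Lower Stieltjes integral of `X : ℒ → ℝ` with respect to `μ` on `𝒜L`. -/
noncomputable def lowerSInt {ι : Type*} (H : ι → Set Ω) (𝒜L : Set (Set Ω))
    (X : ι → ℝ) (μ : Set Ω → ℝ) : ℝ :=
  sSup {x | ∃ T : Finset (Set Ω), IsFinPart 𝒜L T ∧
    x = ∑ A ∈ T, sInf {y | ∃ i, H i ⊆ A ∧ y = X i} * μ A}

/-- Upper Stieltjes integral of `X : ℒ → ℝ` with respect to `μ` on `𝒜L`. -/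
noncomputable def upperSInt {ι : Type*} (H : ι → Set Ω) (𝒜L : Set (Set Ω))
    (X : ι → ℝ) (μ : Set Ω → ℝ) : ℝ :=
  sInf {x | ∃ T : Finset (Set Ω), IsFinPart 𝒜L T ∧
    x = ∑ A ∈ T, sSup {y | ∃ i, H i ⊆ A ∧ y = X i} * μ A}

/-- `𝒜L`-continuity of a bounded function `X : ℒ → ℝ`. -/
def ALContinuous {ι : Type*} (H : ι → Set Ω) (𝒜L : Set (Set Ω)) (X : ι → ℝ) : Prop :=
  (∃ M : ℝ, ∀ i, |X i| ≤ M) ∧ ∀ t : ℝ, ∀ ε > (0 : ℝ), ∃ A ∈ 𝒜L,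
    (⋃ i ∈ {i | t + ε ≤ X i}, H i) ⊆ A ∧ A ⊆ ⋃ i ∈ {i | t ≤ X i}, H i

/-- Countable additivity of `P` on the field `𝒜`. -/
def CountablyAdditiveOn (𝒜 : Set (Set Ω)) (P : Set Ω → ℝ) : Prop :=
  ∀ A : ℕ → Set Ω, (∀ n, A n ∈ 𝒜) → (Pairwise fun m n => Disjoint (A m) (A n)) →
    (⋃ n, A n) ∈ 𝒜 → HasSum (fun n => P (A n)) (P (⋃ n, A n))

/-- A (normalized) capacity on the field `𝒜`. -/
def IsCapacity (𝒜 : Set (Set Ω)) (φ : Set Ω → ℝ) : Prop :=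
  φ ∅ = 0 ∧ φ Set.univ = 1 ∧ (∀ A ∈ 𝒜, 0 ≤ φ A ∧ φ A ≤ 1) ∧
    ∀ A ∈ 𝒜, ∀ B ∈ 𝒜, A ⊆ B → φ A ≤ φ B

/-- Total monotonicity of a capacity `φ` on the field `𝒜`. -/
def TotallyMonotone (𝒜 : Set (Set Ω)) (φ : Set Ω → ℝ) : Prop :=
  ∀ n : ℕ, 2 ≤ n → ∀ A : Fin n → Set Ω, (∀ i, A i ∈ 𝒜) →
    ∑ s ∈ Finset.univ.powerset.filter (fun s : Finset (Fin n) => s.Nonempty),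
      (-1 : ℝ) ^ (s.card - 1) * φ (⋂ i ∈ s, A i) ≤ φ (⋃ i, A i)

/-- Restriction of a conditional probability to the domain `𝒜 × ℬ⁰`, viewed as a point
of the product space `ℝ^(𝒜 × ℬ⁰)`. -/
def restrictPairs (𝒜 ℬ : Set (Set Ω)) (Q : Set Ω → Set Ω → ℝ)
    (p : {p : Set Ω × Set Ω // p.1 ∈ 𝒜 ∧ p.2 ∈ ℬ ∧ p.2.Nonempty}) : ℝ :=
  Q p.val.1 p.val.2

/-- Restriction of a set function to the domain `𝒜`, viewed as a point of `ℝ^𝒜`. -/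
def restrictDom (𝒜 : Set (Set Ω)) (μ : Set Ω → ℝ) (A : {A : Set Ω // A ∈ 𝒜}) : ℝ :=
  μ A.val

/-- The field of all unions of members of the partition `H`, i.e. `⟨ℒ⟩*`. -/
def unionsOf {ι : Type*} (H : ι → Set Ω) : Set (Set Ω) :=
  {A | ∃ S : Set ι, A = ⋃ i ∈ S, H i}

/-- The set `𝒬^fd` of fully ℒ-disintegrable full conditional probabilities on `𝒜`
extending `{π, σ}`. -/
def QfdSet {ι : Type*} (𝒜 𝒜L : Set (Set Ω)) (H : ι → Set Ω)
    (π : Set Ω → ℝ) (σ : Set Ω → ι → ℝ) : Set (Set Ω → Set Ω → ℝ) :=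
  {Q | IsFCP 𝒜 Q ∧ ExtendsPriorStrategy 𝒜 𝒜L H π σ Q ∧
    ∀ F ∈ 𝒜, ∀ K ∈ 𝒜L, K.Nonempty →
      Q F K = lowerSInt H 𝒜L (fun i => σ F i) fun B => Q B K}

/-- The set `𝒬^fsc` of fully strongly ℒ-conglomerable full conditional probabilities
on `𝒜` extending `{π, σ}`. -/
def QfscSet {ι : Type*} (𝒜 𝒜L : Set (Set Ω)) (H : ι → Set Ω)
    (π : Set Ω → ℝ) (σ : Set Ω → ι → ℝ) : Set (Set Ω → Set Ω → ℝ) :=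
  {Q | IsFCP 𝒜 Q ∧ ExtendsPriorStrategy 𝒜 𝒜L H π σ Q ∧
    ∀ F ∈ 𝒜, ∀ K ∈ 𝒜L, K.Nonempty → ∀ B ∈ 𝒜L, B.Nonempty → B ⊆ K →
      Q B K * sInf {x | ∃ i, H i ⊆ B ∧ x = σ F i} ≤ Q (F ∩ B) K ∧
      Q (F ∩ B) K ≤ Q B K * sSup {x | ∃ i, H i ⊆ B ∧ x = σ F i}}

/-- The set `𝒫^sc` of strongly ℒ-conglomerable joint probabilities consistent with `{π, σ}`. -/
def PscSet {ι : Type*} (𝒜 𝒜L : Set (Set Ω)) (H : ι → Set Ω)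
    (π : Set Ω → ℝ) (σ : Set Ω → ι → ℝ) : Set (Set Ω → ℝ) :=
  {μ | (∃ P ∈ FCPSet 𝒜 𝒜L H π σ, μ = fun F => P F Set.univ) ∧
    ∀ F ∈ 𝒜, ∀ B ∈ 𝒜L, B.Nonempty →
      π B * sInf {x | ∃ i, H i ⊆ B ∧ x = σ F i} ≤ μ (F ∩ B) ∧
      μ (F ∩ B) ≤ π B * sSup {x | ∃ i, H i ⊆ B ∧ x = σ F i}}

/-- The set `𝒫^fd` of fully ℒ-disintegrable conditional probabilities on `𝒜 × 𝒜L⁰`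
extending `{π, σ}`. -/
def PfdSet {ι : Type*} (𝒜 𝒜L : Set (Set Ω)) (H : ι → Set Ω)
    (π : Set Ω → ℝ) (σ : Set Ω → ι → ℝ) : Set (Set Ω → Set Ω → ℝ) :=
  {P | (∀ E ∈ 𝒜, ∀ K ∈ 𝒜L, K.Nonempty → P E K = P (E ∩ K) K) ∧
    (∀ K ∈ 𝒜L, K.Nonempty → IsFAP 𝒜 fun E => P E K) ∧
    (∀ E ∈ 𝒜, ∀ F ∈ 𝒜, ∀ K ∈ 𝒜L, K.Nonempty → E ∩ K ∈ 𝒜L → (E ∩ K).Nonempty →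
      P (E ∩ F) K = P E K * P F (E ∩ K)) ∧
    (∀ B ∈ 𝒜L, P B Set.univ = π B) ∧ (∀ F ∈ 𝒜, ∀ i, P F (H i) = σ F i) ∧
    ∀ F ∈ 𝒜, ∀ K ∈ 𝒜L, K.Nonempty →
      P F K = lowerSInt H 𝒜L (fun i => σ F i) fun B => P B K}

/-- The Choquet integral `C∫ X dφ = ∫₀¹ φ₊((X ≥ t)) dt` of a `[0,1]`-valued `X : ℒ → ℝ`
with respect to a capacity `φ` on `𝒜L`, where `φ₊` is the inner extension of `φ`. -/
noncomputable def choquetInt {ι : Type*} (H : ι → Set Ω) (𝒜L : Set (Set Ω))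
    (X : ι → ℝ) (φ : Set Ω → ℝ) : ℝ :=
  ∫ t in (0 : ℝ)..(1 : ℝ),
    sSup {y | ∃ B ∈ 𝒜L, B ⊆ (⋃ i ∈ {i | t ≤ X i}, H i) ∧ y = φ B}

/-- The ℒ-disintegrable joint probability `P^d(F) = ∫ σ(F|Hᵢ) π(dHᵢ)` (the Stieltjes
integral, here given by the lower Stieltjes integral, with which it coincides under
the `𝒜L`-continuity assumption). -/
noncomputable def jointPd {Ω ι : Type*} (H : ι → Set Ω) (𝒜L : Set (Set Ω))
    (π : Set Ω → ℝ) (σ : Set Ω → ι → ℝ) (F : Set Ω) : ℝ :=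
  lowerSInt H 𝒜L (fun i => σ F i) π

/-- The set `𝒫^d` of full conditional probabilities on `𝒜` extending `{P^d, σ}`. -/
def PdSet {Ω ι : Type*} (𝒜 𝒜L : Set (Set Ω)) (H : ι → Set Ω)
    (π : Set Ω → ℝ) (σ : Set Ω → ι → ℝ) : Set (Set Ω → Set Ω → ℝ) :=
  {P | IsFCP 𝒜 P ∧ (∀ F ∈ 𝒜, P F Set.univ = jointPd H 𝒜L π σ F) ∧
    ∀ F ∈ 𝒜, ∀ i, P F (H i) = σ F i}

/-! ### Fields of sets and finitely additive probabilities -/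

namespace IsSetField

variable {𝒜 : Set (Set Ω)}

lemma inter (h : IsSetField 𝒜) {A B : Set Ω} (hA : A ∈ 𝒜) (hB : B ∈ 𝒜) : A ∩ B ∈ 𝒜 := by
  have := h.2.1 _ (h.2.2 _ (h.2.1 _ hA) _ (h.2.1 _ hB))
  rwa [← compl_inter, compl_compl] at this

lemma empty (h : IsSetField 𝒜) : (∅ : Set Ω) ∈ 𝒜 := by
  simpa using h.2.1 _ h.1

lemma sUnion (h : IsSetField 𝒜) (T : Finset (Set Ω)) (hT : (↑T : Set (Set Ω)) ⊆ 𝒜) :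
    ⋃₀ (↑T : Set (Set Ω)) ∈ 𝒜 := by
  induction T using Finset.induction_on with
  | empty => simpa using h.empty
  | insert A T _ ih =>
    rw [Finset.coe_insert, insert_subset_iff] at hT
    rw [Finset.coe_insert, sUnion_insert]
    exact h.2.2 _ hT.1 _ (ih hT.2)

end IsSetField

namespace IsFAP

variable {𝒜 : Set (Set Ω)} {P : Set Ω → ℝ}

lemma empty (h : IsFAP 𝒜 P) (h𝒜 : IsSetField 𝒜) : P ∅ = 0 := by
  have := h.2.2 ∅ h𝒜.empty ∅ h𝒜.empty (by simp)
  rw [union_self] at this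
  linarith

lemma inter_add_compl (h : IsFAP 𝒜 P) (h𝒜 : IsSetField 𝒜) {A B : Set Ω} (hA : A ∈ 𝒜)
    (hB : B ∈ 𝒜) : P (A ∩ B) + P (Aᶜ ∩ B) = P B := by
  have := h.2.2 _ (h𝒜.inter hA hB) _ (h𝒜.inter (h𝒜.2.1 _ hA) hB)
    (disjoint_compl_right.mono inter_subset_left inter_subset_left)
  rw [← union_inter_distrib_right, union_compl_self, univ_inter] at this
  exact this.symm

lemma add_compl (h : IsFAP 𝒜 P) (h𝒜 : IsSetField 𝒜) {A : Set Ω} (hA : A ∈ 𝒜) :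
    P A + P Aᶜ = 1 := by
  have := h.inter_add_compl h𝒜 hA h𝒜.1
  rwa [inter_univ, inter_univ, h.2.1] at this

lemma mono (h : IsFAP 𝒜 P) (h𝒜 : IsSetField 𝒜) {A B : Set Ω} (hA : A ∈ 𝒜)
    (hB : B ∈ 𝒜) (hAB : A ⊆ B) : P A ≤ P B := by
  have h1 := h.inter_add_compl h𝒜 hA hB
  have h2 := (h.1 _ (h𝒜.inter (h𝒜.2.1 _ hA) hB)).1
  rw [inter_eq_left.2 hAB] at h1
  linarith

lemma inter_sUnion (h : IsFAP 𝒜 P) (h𝒜 : IsSetField 𝒜) {A : Set Ω} (hA : A ∈ 𝒜)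
    (T : Finset (Set Ω)) (hT : (↑T : Set (Set Ω)) ⊆ 𝒜)
    (hd : ∀ B ∈ T, ∀ C ∈ T, B ≠ C → Disjoint B C) :
    P (A ∩ ⋃₀ (↑T : Set (Set Ω))) = ∑ B ∈ T, P (A ∩ B) := by
  induction T using Finset.induction_on with
  | empty => simpa using h.empty h𝒜
  | insert B T hB ih =>
    rw [Finset.coe_insert, insert_subset_iff] at hT
    rw [Finset.coe_insert, sUnion_insert, Finset.sum_insert hB, inter_union_distrib_left,
      h.2.2 _ (h𝒜.inter hA hT.1) _ (h𝒜.inter hA (h𝒜.sUnion T hT.2)), ih hT.2]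
    · exact fun C hC D hD => hd C (Finset.mem_insert_of_mem hC) D (Finset.mem_insert_of_mem hD)
    · refine Disjoint.mono inter_subset_right inter_subset_right ?_
      rw [disjoint_sUnion_right]
      intro C hC
      refine hd B (Finset.mem_insert_self _ _) C (Finset.mem_insert_of_mem hC) ?_
      rintro rfl
      exact hB hC

lemma eq_sum (h : IsFAP 𝒜 P) (h𝒜 : IsSetField 𝒜) {A : Set Ω} (hA : A ∈ 𝒜)
    {T : Finset (Set Ω)} (hT : IsFinPart 𝒜 T) : P A = ∑ B ∈ T, P (A ∩ B) := by
  rw [← h.inter_sUnion h𝒜 hA T hT.1 hT.2.2.1, hT.2.2.2, inter_univ]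

/-- Pointwise comparison on the common refinement of three partitions yields a comparison of
the corresponding integrals of step functions. -/
lemma sum_le_of_refinement (h : IsFAP 𝒜 P) (h𝒜 : IsSetField 𝒜)
    {T₁ T₂ T₃ : Finset (Set Ω)} (h₁ : IsFinPart 𝒜 T₁) (h₂ : IsFinPart 𝒜 T₂)
    (h₃ : IsFinPart 𝒜 T₃) (a b c : Set Ω → ℝ) (ε : ℝ)
    (hle : ∀ A ∈ T₁, ∀ B ∈ T₂, ∀ C ∈ T₃, (A ∩ B ∩ C).Nonempty → a A + b B ≤ c C + ε) :
    ∑ A ∈ T₁, a A * P A + ∑ B ∈ T₂, b B * P B ≤ ∑ C ∈ T₃, c C * P C + ε := by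
  have ea : ∑ A ∈ T₁, a A * P A = ∑ A ∈ T₁, ∑ B ∈ T₂, ∑ C ∈ T₃, a A * P (A ∩ B ∩ C) := by
    refine Finset.sum_congr rfl fun A hA => ?_
    rw [h.eq_sum h𝒜 (h₁.1 hA) h₂, Finset.mul_sum]
    refine Finset.sum_congr rfl fun B hB => ?_
    rw [h.eq_sum h𝒜 (h𝒜.inter (h₁.1 hA) (h₂.1 hB)) h₃, Finset.mul_sum]
  have eb : ∑ B ∈ T₂, b B * P B = ∑ A ∈ T₁, ∑ B ∈ T₂, ∑ C ∈ T₃, b B * P (A ∩ B ∩ C) := by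
    rw [Finset.sum_comm]
    refine Finset.sum_congr rfl fun B hB => ?_
    rw [h.eq_sum h𝒜 (h₂.1 hB) h₁, Finset.mul_sum]
    refine Finset.sum_congr rfl fun A hA => ?_
    rw [inter_comm B A, h.eq_sum h𝒜 (h𝒜.inter (h₁.1 hA) (h₂.1 hB)) h₃, Finset.mul_sum]
  have ec : ∑ C ∈ T₃, c C * P C = ∑ A ∈ T₁, ∑ B ∈ T₂, ∑ C ∈ T₃, c C * P (A ∩ B ∩ C) := by
    have : ∀ A ∈ T₁, ∑ B ∈ T₂, ∑ C ∈ T₃, c C * P (A ∩ B ∩ C) =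
        ∑ C ∈ T₃, c C * P (C ∩ A) := by
      intro A hA
      rw [Finset.sum_comm]
      refine Finset.sum_congr rfl fun C hC => ?_
      rw [h.eq_sum h𝒜 (h𝒜.inter (h₃.1 hC) (h₁.1 hA)) h₂, Finset.mul_sum]
      refine Finset.sum_congr rfl fun B _ => ?_
      rw [show A ∩ B ∩ C = C ∩ A ∩ B by ext; simp; tauto]
    rw [Finset.sum_congr rfl this, Finset.sum_comm]
    refine Finset.sum_congr rfl fun C hC => ?_
    rw [h.eq_sum h𝒜 (h₃.1 hC) h₁, Finset.mul_sum]
  have e1 : ε = ∑ A ∈ T₁, ∑ B ∈ T₂, ∑ C ∈ T₃, ε * P (A ∩ B ∩ C) := by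
    have : ε = ε * P univ := by rw [h.2.1, mul_one]
    conv_lhs => rw [this, h.eq_sum h𝒜 h𝒜.1 h₁, Finset.mul_sum]
    refine Finset.sum_congr rfl fun A hA => ?_
    rw [univ_inter, h.eq_sum h𝒜 (h₁.1 hA) h₂, Finset.mul_sum]
    refine Finset.sum_congr rfl fun B hB => ?_
    rw [h.eq_sum h𝒜 (h𝒜.inter (h₁.1 hA) (h₂.1 hB)) h₃, Finset.mul_sum]
  rw [ea, eb, ec]
  conv_rhs => rw [e1]
  simp only [← Finset.sum_add_distrib, ← add_mul]
  refine Finset.sum_le_sum fun A hA => Finset.sum_le_sum fun B hB =>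
    Finset.sum_le_sum fun C hC => ?_
  rcases (A ∩ B ∩ C).eq_empty_or_nonempty with h0 | h0
  · rw [h0, h.empty h𝒜]; simp
  · exact mul_le_mul_of_nonneg_right (hle A hA B hB C hC h0)
      (h.1 _ (h𝒜.inter (h𝒜.inter (h₁.1 hA) (h₂.1 hB)) (h₃.1 hC))).1

end IsFAP

/-! ### The Stieltjes integral and the disintegrable joint probability -/

section Integral

variable {ι : Type*} {H : ι → Set Ω} {𝒜L : Set (Set Ω)}

lemma IsPartition.exists_mem (hH : IsPartition H) (ω : Ω) : ∃ i, ω ∈ H i := by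
  have : ω ∈ ⋃ i, H i := by rw [hH.2.2]; trivial
  simpa using this

lemma IsPartition.eq_of_mem (hH : IsPartition H) {ω : Ω} {i j : ι} (hi : ω ∈ H i)
    (hj : ω ∈ H j) : i = j := by
  by_contra hne
  exact Set.disjoint_left.1 (hH.2.1 hne) hi hj

lemma IsFieldOver.subset_of_mem (hH : IsPartition H) (hL : IsFieldOver H 𝒜L) {A : Set Ω}
    (hA : A ∈ 𝒜L) {ω : Ω} (hω : ω ∈ A) {i : ι} (hi : ω ∈ H i) : H i ⊆ A := by
  obtain ⟨S, rfl⟩ := hL.2.2 A hA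
  obtain ⟨j, hj, hωj⟩ := mem_iUnion₂.1 hω
  obtain rfl := hH.eq_of_mem hi hωj
  exact subset_biUnion_of_mem (u := fun i => H i) hj

/-- The infimum of `X` over the members of the partition contained in `A`. -/
noncomputable def infOn (H : ι → Set Ω) (X : ι → ℝ) (A : Set Ω) : ℝ :=
  sInf {y | ∃ i, H i ⊆ A ∧ y = X i}

lemma infOn_le {X : ι → ℝ} (hX : ∀ i, 0 ≤ X i) {A : Set Ω} {i : ι} (hi : H i ⊆ A) :
    infOn H X A ≤ X i :=
  csInf_le ⟨0, by rintro _ ⟨j, _, rfl⟩; exact hX j⟩ ⟨i, hi, rfl⟩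

lemma le_infOn {X : ι → ℝ} {A : Set Ω} {i : ι} (hi : H i ⊆ A) {c : ℝ}
    (hc : ∀ j, H j ⊆ A → c ≤ X j) : c ≤ infOn H X A :=
  le_csInf ⟨_, i, hi, rfl⟩ (by rintro _ ⟨j, hj, rfl⟩; exact hc j hj)

/-- An `𝒜L`-continuous function has small oscillation on the cells of a suitable finite
partition: the atoms generated by sets squeezed between consecutive level sets. -/
lemma exists_small_osc (hH : IsPartition H) (hL : IsFieldOver H 𝒜L) {X : ι → ℝ}
    (hX : ∀ i, 0 ≤ X i ∧ X i ≤ 1) (hc : ALContinuous H 𝒜L X) {ε : ℝ} (hε : 0 < ε) :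
    ∃ T, IsFinPart 𝒜L T ∧ ∀ A ∈ T, ∀ i j, H i ⊆ A → H j ⊆ A → X i ≤ X j + ε := by
  obtain ⟨n, hn⟩ := exists_nat_gt (2 / ε)
  have hn0 : (0 : ℝ) < n := lt_trans (by positivity) hn
  have hchoice : ∀ k : ℕ, ∃ A ∈ 𝒜L, (⋃ i ∈ {i | (k : ℝ) / n + 1 / n ≤ X i}, H i) ⊆ A ∧
      A ⊆ ⋃ i ∈ {i | (k : ℝ) / n ≤ X i}, H i := fun k => hc.2 _ _ (by positivity)
  choose B hB hB1 hB2 using hchoice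
  let atom : Finset ℕ → Set Ω := fun s => {ω | ∀ k < n, ω ∈ B k ↔ k ∈ s}
  have hatom : ∀ s, atom s ∈ 𝒜L := by
    intro s
    have : ∀ m : ℕ, {ω | ∀ k < m, ω ∈ B k ↔ k ∈ s} ∈ 𝒜L := by
      intro m
      induction m with
      | zero => simpa using hL.1.1
      | succ m ih =>
        have hm : {ω | ω ∈ B m ↔ m ∈ s} ∈ 𝒜L := by
          by_cases hms : m ∈ s
          · simpa [hms] using hB m
          · simp only [hms, iff_false]
            exact hL.1.2.1 _ (hB m)
        convert hL.1.inter ih hm using 1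
        ext ω
        exact Nat.forall_lt_succ_right
    exact this n
  refine ⟨((Finset.range n).powerset.image atom).filter fun A => A.Nonempty,
    ⟨?_, ?_, ?_, ?_⟩, ?_⟩
  · intro A hA
    simp only [Finset.coe_filter, Finset.mem_image, mem_ofPred_eq] at hA
    obtain ⟨⟨s, _, rfl⟩, _⟩ := hA
    exact hatom s
  · intro A hA
    exact (Finset.mem_filter.1 hA).2
  · intro A hA A' hA' hne
    simp only [Finset.mem_filter, Finset.mem_image, Finset.mem_powerset] at hA hA'
    obtain ⟨⟨s, hs, rfl⟩, _⟩ := hA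
    obtain ⟨⟨s', hs', rfl⟩, _⟩ := hA'
    rw [Set.disjoint_left]
    intro ω h1 h2
    apply hne
    congr 1
    ext k
    constructor
    · intro hk
      have hkn := Finset.mem_range.1 (hs hk)
      exact (h2 k hkn).1 ((h1 k hkn).2 hk)
    · intro hk
      have hkn := Finset.mem_range.1 (hs' hk)
      exact (h1 k hkn).1 ((h2 k hkn).2 hk)
  · refine eq_univ_of_forall fun ω => ?_
    have hmem : ω ∈ atom ((Finset.range n).filter fun k => ω ∈ B k) := by
      intro k hk
      simp [hk]
    refine ⟨_, ?_, hmem⟩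
    simp only [Finset.coe_filter, Finset.mem_image, mem_ofPred_eq, Finset.mem_powerset]
    exact ⟨⟨_, Finset.filter_subset _ _, rfl⟩, ⟨ω, hmem⟩⟩
  · intro A hA i j hi hj
    simp only [Finset.mem_filter, Finset.mem_image, Finset.mem_powerset] at hA
    obtain ⟨⟨s, hs, rfl⟩, _⟩ := hA
    by_contra! hlt
    have h2n : 2 / (n : ℝ) < ε := by
      rw [div_lt_iff₀ hε] at hn
      rw [div_lt_iff₀ hn0]; linarith
    have hgap : n * X j + 2 < n * X i := by
      have : X j + 2 / n < X i := by linarith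
      have := mul_lt_mul_of_pos_left this hn0
      rwa [mul_add, mul_div_cancel₀ _ hn0.ne'] at this
    -- the level `k / n` separates `X j` from `X i`, with room `1 / n` to spare
    set k := ⌊n * X j⌋₊ + 1 with hk
    have hk1 : n * X j < k := by rw [hk]; push_cast; exact Nat.lt_floor_add_one _
    have hk2 : (k : ℝ) ≤ n * X j + 1 := by
      rw [hk]; push_cast
      linarith [Nat.floor_le (mul_nonneg hn0.le (hX j).1)]
    have hkn : k < n := by
      have : (k : ℝ) < n := by nlinarith [(hX i).2]
      exact_mod_cast this
    obtain ⟨ω, hω⟩ := hH.1 i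
    obtain ⟨ω', hω'⟩ := hH.1 j
    have h1 : ω ∈ B k := by
      refine hB1 k (mem_biUnion (x := i) ?_ hω)
      rw [mem_ofPred_eq, ← add_div, div_le_iff₀ hn0]
      linarith
    have h2 : ω' ∈ B k := (hj hω' k hkn).2 ((hi hω k hkn).1 h1)
    obtain ⟨j', hj', hωj'⟩ := mem_iUnion₂.1 (hB2 k h2)
    obtain rfl := hH.eq_of_mem hω' hωj'
    rw [mem_ofPred_eq, div_le_iff₀ hn0] at hj'
    linarith

variable {μ : Set Ω → ℝ}

/-- The constant `1` bounds every lower sum of a `[0,1]`-valued function. -/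
lemma lowerSum_le_one (hH : IsPartition H) (hL : IsFieldOver H 𝒜L) (hμ : IsFAP 𝒜L μ)
    {X : ι → ℝ} (hX : ∀ i, 0 ≤ X i ∧ X i ≤ 1) {T : Finset (Set Ω)} (hT : IsFinPart 𝒜L T) :
    ∑ A ∈ T, infOn H X A * μ A ≤ 1 := by
  have h1 : (1 : ℝ) = ∑ A ∈ T, 1 * μ A := by
    simpa only [hμ.2.1, univ_inter, one_mul] using hμ.eq_sum hL.1 hL.1.1 hT
  rw [h1]
  refine Finset.sum_le_sum fun A hA => mul_le_mul_of_nonneg_right ?_ (hμ.1 _ (hT.1 hA)).1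
  obtain ⟨ω, hω⟩ := hT.2.1 A hA
  obtain ⟨i, hi⟩ := hH.exists_mem ω
  exact (infOn_le (fun i => (hX i).1) (hL.subset_of_mem hH (hT.1 hA) hω hi)).trans (hX i).2

lemma lowerSum_le (hH : IsPartition H) (hL : IsFieldOver H 𝒜L) (hμ : IsFAP 𝒜L μ)
    {X : ι → ℝ} (hX : ∀ i, 0 ≤ X i ∧ X i ≤ 1) {T : Finset (Set Ω)} (hT : IsFinPart 𝒜L T) :
    ∑ A ∈ T, infOn H X A * μ A ≤ lowerSInt H 𝒜L X μ := by
  refine le_csSup ⟨1, ?_⟩ ⟨T, hT, rfl⟩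
  rintro _ ⟨S, hS, rfl⟩
  exact lowerSum_le_one hH hL hμ hX hS

lemma isFinPart_univ [Nonempty Ω] (hL : IsSetField 𝒜L) : IsFinPart 𝒜L {univ} := by
  refine ⟨by simpa using hL.1, by simp, by simp, by simp⟩

lemma lowerSInt_le [Nonempty Ω] (hL : IsSetField 𝒜L) {X : ι → ℝ} {c : ℝ}
    (h : ∀ T, IsFinPart 𝒜L T → ∑ A ∈ T, infOn H X A * μ A ≤ c) :
    lowerSInt H 𝒜L X μ ≤ c := by
  refine csSup_le ⟨_, _, isFinPart_univ hL, rfl⟩ ?_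
  rintro _ ⟨T, hT, rfl⟩
  exact h T hT

/-- A lower bound `c` of `X` on the cells inside `B` gives `c * μ B` as a lower bound of the
integral. -/
lemma mul_le_lowerSInt (hH : IsPartition H) (hL : IsFieldOver H 𝒜L) (hμ : IsFAP 𝒜L μ)
    {X : ι → ℝ} (hX : ∀ i, 0 ≤ X i ∧ X i ≤ 1) {B : Set Ω} (hB : B ∈ 𝒜L) (hne : B.Nonempty)
    {c : ℝ} (hc : ∀ i, H i ⊆ B → c ≤ X i) : c * μ B ≤ lowerSInt H 𝒜L X μ := by
  have hT : IsFinPart 𝒜L (({B, Bᶜ} : Finset (Set Ω)).filter fun A => A.Nonempty) := by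
    refine ⟨?_, fun A hA => (Finset.mem_filter.1 hA).2, ?_, ?_⟩
    · intro A hA
      simp only [Finset.coe_filter, Finset.mem_insert, Finset.mem_singleton,
        mem_ofPred_eq] at hA
      rcases hA.1 with rfl | rfl
      · exact hB
      · exact hL.1.2.1 _ hB
    · intro A hA A' hA' hAA'
      simp only [Finset.mem_filter, Finset.mem_insert, Finset.mem_singleton] at hA hA'
      rcases hA.1 with rfl | rfl <;> rcases hA'.1 with rfl | rfl
      · exact absurd rfl hAA'
      · exact disjoint_compl_right
      · exact disjoint_compl_left
      · exact absurd rfl hAA'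
    · refine eq_univ_of_forall fun ω => ?_
      by_cases hω : ω ∈ B
      · exact ⟨B, by simp [hne], hω⟩
      · exact ⟨Bᶜ, by simpa using ⟨ω, hω⟩, hω⟩
  refine le_trans ?_ (lowerSum_le hH hL hμ hX hT)
  obtain ⟨ω, hω⟩ := hne
  obtain ⟨i, hi⟩ := hH.exists_mem ω
  refine le_trans (mul_le_mul_of_nonneg_right
    (le_infOn (hL.subset_of_mem hH hB hω hi) hc) (hμ.1 _ hB).1) ?_
  refine Finset.single_le_sum (f := fun A => infOn H X A * μ A) ?_
    (by simpa using ⟨ω, hω⟩)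
  intro A hA
  refine mul_nonneg ?_ (hμ.1 _ (hT.1 hA)).1
  obtain ⟨ω', hω'⟩ := hT.2.1 A hA
  obtain ⟨j, hj⟩ := hH.exists_mem ω'
  exact le_infOn (hL.subset_of_mem hH (hT.1 hA) hω' hj) fun j _ => (hX j).1

/-- Additivity of the Stieltjes integral on `𝒜L`-continuous functions. -/
lemma lowerSInt_add [Nonempty Ω] (hH : IsPartition H) (hL : IsFieldOver H 𝒜L)
    (hμ : IsFAP 𝒜L μ) {X Y Z : ι → ℝ} (hX : ∀ i, 0 ≤ X i ∧ X i ≤ 1)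
    (hY : ∀ i, 0 ≤ Y i ∧ Y i ≤ 1) (hZ : ∀ i, 0 ≤ Z i ∧ Z i ≤ 1)
    (cX : ALContinuous H 𝒜L X) (cY : ALContinuous H 𝒜L Y) (cZ : ALContinuous H 𝒜L Z)
    (hXYZ : ∀ i, Z i = X i + Y i) :
    lowerSInt H 𝒜L Z μ = lowerSInt H 𝒜L X μ + lowerSInt H 𝒜L Y μ := by
  -- every point of a cell common to three partitions lies in a member `H i` of that cell
  have key : ∀ {T₁ T₂ T₃ : Finset (Set Ω)}, IsFinPart 𝒜L T₁ → IsFinPart 𝒜L T₂ →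
      IsFinPart 𝒜L T₃ → ∀ A ∈ T₁, ∀ B ∈ T₂, ∀ C ∈ T₃, (A ∩ B ∩ C).Nonempty →
      ∃ i, H i ⊆ A ∧ H i ⊆ B ∧ H i ⊆ C := by
    rintro T₁ T₂ T₃ h₁ h₂ h₃ A hA B hB C hC ⟨ω, ⟨hωA, hωB⟩, hωC⟩
    obtain ⟨i, hi⟩ := hH.exists_mem ω
    exact ⟨i, hL.subset_of_mem hH (h₁.1 hA) hωA hi, hL.subset_of_mem hH (h₂.1 hB) hωB hi,
      hL.subset_of_mem hH (h₃.1 hC) hωC hi⟩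
  apply le_antisymm
  · refine le_of_forall_pos_le_add fun ε hε => ?_
    obtain ⟨T₁, h₁, o₁⟩ := exists_small_osc hH hL hX cX (half_pos hε)
    obtain ⟨T₂, h₂, o₂⟩ := exists_small_osc hH hL hY cY (half_pos hε)
    refine lowerSInt_le hL.1 fun T₃ h₃ => ?_
    have := hμ.sum_le_of_refinement hL.1 h₁ h₂ h₃ (fun A => -infOn H X A)
      (fun A => -infOn H Y A) (fun A => -infOn H Z A) ε (by
        intro A hA B hB C hC hne
        obtain ⟨i, iA, iB, iC⟩ := key h₁ h₂ h₃ A hA B hB C hC hne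
        have e1 : X i - ε / 2 ≤ infOn H X A := le_infOn iA fun j hj => by
          linarith [o₁ A hA i j iA hj]
        have e2 : Y i - ε / 2 ≤ infOn H Y B := le_infOn iB fun j hj => by
          linarith [o₂ B hB i j iB hj]
        have e3 := infOn_le (fun i => (hZ i).1) iC
        linarith [hXYZ i])
    simp only [neg_mul, Finset.sum_neg_distrib] at this
    linarith [lowerSum_le hH hL hμ hX h₁, lowerSum_le hH hL hμ hY h₂]
  · refine le_of_forall_pos_le_add fun ε hε => ?_
    obtain ⟨T₃, h₃, o₃⟩ := exists_small_osc hH hL hZ cZ hε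
    have hsum : ∀ T₁, IsFinPart 𝒜L T₁ → ∀ T₂, IsFinPart 𝒜L T₂ →
        ∑ A ∈ T₁, infOn H X A * μ A + ∑ A ∈ T₂, infOn H Y A * μ A ≤
          lowerSInt H 𝒜L Z μ + ε := by
      intro T₁ h₁ T₂ h₂
      refine (hμ.sum_le_of_refinement hL.1 h₁ h₂ h₃ (infOn H X) (infOn H Y) (infOn H Z) ε
        ?_).trans (by linarith [lowerSum_le hH hL hμ hZ h₃])
      intro A hA B hB C hC hne
      obtain ⟨i, iA, iB, iC⟩ := key h₁ h₂ h₃ A hA B hB C hC hne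
      have e1 := infOn_le (fun i => (hX i).1) iA
      have e2 := infOn_le (fun i => (hY i).1) iB
      have e3 : Z i - ε ≤ infOn H Z C := le_infOn iC fun j hj => by
        linarith [o₃ C hC i j iC hj]
      linarith [hXYZ i]
    have h1 : lowerSInt H 𝒜L X μ ≤ lowerSInt H 𝒜L Z μ + ε - lowerSInt H 𝒜L Y μ := by
      refine lowerSInt_le hL.1 fun T₁ h₁ => ?_
      have h2 : lowerSInt H 𝒜L Y μ ≤
          lowerSInt H 𝒜L Z μ + ε - ∑ A ∈ T₁, infOn H X A * μ A :=
        lowerSInt_le hL.1 fun T₂ h₂ => by linarith [hsum T₁ h₁ T₂ h₂]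
      linarith
    linarith

end Integral

section Strategy

variable {ι : Type*} {H : ι → Set Ω} {𝒜L 𝒜 : Set (Set Ω)} {π : Set Ω → ℝ} {σ : Set Ω → ι → ℝ}

lemma IsStrategy.apply_self (hσ : IsStrategy 𝒜 H σ) {i : ι} (hi : H i ∈ 𝒜) :
    σ (H i) i = 1 :=
  (hσ i).2 _ hi subset_rfl

lemma IsStrategy.apply_inter (hσ : IsStrategy 𝒜 H σ) (h𝒜 : IsSetField 𝒜) {i : ι}
    (hi : H i ∈ 𝒜) {F : Set Ω} (hF : F ∈ 𝒜) : σ (F ∩ H i) i = σ F i := by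
  have h1 := (hσ i).1.inter_add_compl h𝒜 hi hF
  have h2 := (hσ i).1.add_compl h𝒜 hi
  have h3 := (hσ i).1.mono h𝒜 (h𝒜.inter (h𝒜.2.1 _ hi) hF) (h𝒜.2.1 _ hi) inter_subset_left
  have h4 := ((hσ i).1.1 _ (h𝒜.inter (h𝒜.2.1 _ hi) hF)).1
  have h5 := hσ.apply_self hi
  rw [inter_comm F]
  simp only at *
  linarith

lemma IsStrategy.apply_ne (hσ : IsStrategy 𝒜 H σ) (hH : IsPartition H) (h𝒜 : IsSetField 𝒜)
    {i j : ι} (hi : H i ∈ 𝒜) (hij : i ≠ j) : σ (H i) j = 0 := by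
  have h1 := (hσ j).1.add_compl h𝒜 hi
  have h2 := (hσ j).2 _ (h𝒜.2.1 _ hi) (subset_compl_iff_disjoint_left.2 (hH.2.1 hij))
  linarith

lemma jointPd_isFAP [Nonempty Ω] (hH : IsPartition H) (hL : IsFieldOver H 𝒜L)
    (h𝒜 : IsSetField 𝒜) (hπ : IsFAP 𝒜L π) (hσ : IsStrategy 𝒜 H σ)
    (hcont : ∀ F ∈ 𝒜, ALContinuous H 𝒜L fun i => σ F i) :
    IsFAP 𝒜 (jointPd H 𝒜L π σ) := by
  have hX : ∀ F ∈ 𝒜, ∀ i, 0 ≤ σ F i ∧ σ F i ≤ 1 := fun F hF i => (hσ i).1.1 F hF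
  have hle : ∀ F ∈ 𝒜, jointPd H 𝒜L π σ F ≤ 1 := fun F hF =>
    lowerSInt_le hL.1 fun T hT => lowerSum_le_one hH hL hπ (hX F hF) hT
  refine ⟨fun F hF => ⟨?_, hle F hF⟩, le_antisymm (hle _ h𝒜.1) ?_, ?_⟩
  · have := mul_le_lowerSInt hH hL hπ (hX F hF) hL.1.1 univ_nonempty (c := 0)
      fun i _ => (hX F hF i).1
    rwa [zero_mul] at this
  · have := mul_le_lowerSInt hH hL hπ (hX _ h𝒜.1) hL.1.1 univ_nonempty (c := 1)
      fun i _ => (hσ i).1.2.1.ge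
    rwa [hπ.2.1, one_mul] at this
  · intro A hA B hB hAB
    have hU := h𝒜.2.2 A hA B hB
    exact lowerSInt_add hH hL hπ (hX A hA) (hX B hB) (hX _ hU) (hcont A hA) (hcont B hB)
      (hcont _ hU) fun i => (hσ i).1.2.2 A hA B hB hAB

/-- Compatibility of the disintegrable joint probability with the strategy. Both sides are
additive in `F`, so the lower bounds for `F` and `Fᶜ` force equality. -/
lemma jointPd_inter [Nonempty Ω] (hH : IsPartition H) (hL : IsFieldOver H 𝒜L)
    (h𝒜 : IsSetField 𝒜) (hsub : 𝒜L ⊆ 𝒜) (hπ : IsFAP 𝒜L π) (hσ : IsStrategy 𝒜 H σ)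
    (hcont : ∀ F ∈ 𝒜, ALContinuous H 𝒜L fun i => σ F i) {F : Set Ω} (hF : F ∈ 𝒜) (j : ι) :
    jointPd H 𝒜L π σ (F ∩ H j) = σ F j * jointPd H 𝒜L π σ (H j) := by
  have hX : ∀ F ∈ 𝒜, ∀ i, 0 ≤ σ F i ∧ σ F i ≤ 1 := fun F hF i => (hσ i).1.1 F hF
  have hPd := jointPd_isFAP hH hL h𝒜 hπ hσ hcont
  have hj := hsub (hL.2.1 j)
  have low : ∀ G ∈ 𝒜, σ G j * π (H j) ≤ jointPd H 𝒜L π σ (G ∩ H j) := by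
    intro G hG
    refine mul_le_lowerSInt hH hL hπ (hX _ (h𝒜.inter hG hj)) (hL.2.1 j) (hH.1 j) ?_
    intro i hi
    obtain ⟨ω, hω⟩ := hH.1 i
    obtain rfl := hH.eq_of_mem hω (hi hω)
    exact (hσ.apply_inter h𝒜 hj hG).ge
  have h1 := low F hF
  have h2 := low Fᶜ (h𝒜.2.1 _ hF)
  have h3 := hPd.inter_add_compl h𝒜 hF hj
  have h4 := (hσ j).1.add_compl h𝒜 hF
  have h4' : σ Fᶜ j = 1 - σ F j := by linarith
  have h5 : jointPd H 𝒜L π σ (H j) = π (H j) := by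
    have a1 := low univ h𝒜.1
    have a0 : σ univ j = 1 := (hσ j).1.2.1
    rw [univ_inter, a0, one_mul] at a1
    refine le_antisymm ?_ a1
    have a2 := hPd.add_compl h𝒜 hj
    have a3 := hπ.add_compl hL.1 (hL.2.1 j)
    have hcm := hL.1.2.1 _ (hL.2.1 j)
    rcases (H j)ᶜ.eq_empty_or_nonempty with h0 | h0
    · rw [h0, hPd.empty h𝒜] at a2
      rw [h0, hπ.empty hL.1] at a3
      linarith
    · have : 1 * π (H j)ᶜ ≤ jointPd H 𝒜L π σ (H j)ᶜ :=
        mul_le_lowerSInt hH hL hπ (hX _ (hsub hcm)) hcm h0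
          fun i hi => ((hσ i).2 _ (hsub hcm) hi).ge
      linarith
  rw [h4'] at h2
  rw [h5] at h3 ⊢
  linarith

end Strategy

/-! ### Full conditional probabilities built from layers -/

section FCP

variable {𝒜 : Set (Set Ω)}

/-- If each conditioning event `A` has a finitely additive probability `ν A` charging it, and
`ν A`, `ν B` are proportional below `B` whenever `B ⊆ A` (vacuously so when `ν A B = 0`), then
normalising yields a full conditional probability. -/
lemma isFCP_of_layers (h𝒜 : IsSetField 𝒜) (ν : Set Ω → Set Ω → ℝ)
    (hν : ∀ A ∈ 𝒜, A.Nonempty → IsFAP 𝒜 (ν A) ∧ 0 < ν A A)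
    (hprop : ∀ A ∈ 𝒜, ∀ B ∈ 𝒜, B.Nonempty → B ⊆ A → ∀ F ∈ 𝒜, F ⊆ B →
      ν A F * ν B B = ν A B * ν B F) :
    IsFCP 𝒜 fun F A => ν A (F ∩ A) / ν A A := by
  refine ⟨?_, ?_, ?_⟩
  · intro E _ K _ _
    simp only [inter_assoc, inter_self]
  · intro K hK hne
    obtain ⟨h, hpos⟩ := hν K hK hne
    refine ⟨fun A hA => ⟨div_nonneg (h.1 _ (h𝒜.inter hA hK)).1 hpos.le, ?_⟩, ?_, ?_⟩
    · rw [div_le_one hpos]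
      exact h.mono h𝒜 (h𝒜.inter hA hK) hK inter_subset_right
    · simp only [univ_inter]
      exact div_self hpos.ne'
    · intro A hA B hB hAB
      simp only [union_inter_distrib_right]
      rw [h.2.2 _ (h𝒜.inter hA hK) _ (h𝒜.inter hB hK)
        (hAB.mono inter_subset_left inter_subset_left), add_div]
  · intro E hE F hF K hK hne hEK
    have hB := h𝒜.inter hE hK
    obtain ⟨_, hK0⟩ := hν K hK hne
    obtain ⟨_, hB0⟩ := hν _ hB hEK
    have := hprop K hK _ hB hEK inter_subset_right _ (h𝒜.inter hF hB) inter_subset_right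
    simp only
    rw [show E ∩ F ∩ K = F ∩ (E ∩ K) by ext; simp; tauto]
    field_simp
    linarith

/-- Conditioning on the first member of a well-ordered family that charges the conditioning
event yields a full conditional probability. -/
lemma exists_fcp_of_family (h𝒜 : IsSetField 𝒜) {β : Type*} (r : β → β → Prop)
    [IsWellOrder β r] (μ : β → Set Ω → ℝ) (hμ : ∀ b, IsFAP 𝒜 (μ b))
    (hfull : ∀ A ∈ 𝒜, A.Nonempty → ∃ b, 0 < μ b A) :
    ∃ P, IsFCP 𝒜 P ∧ ∀ A ∈ 𝒜, A.Nonempty → ∀ b, 0 < μ b A → (∀ c, r c b → μ c A = 0) →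
      ∀ F, P F A = μ b (F ∩ A) / μ b A := by
  have hfirst : ∀ A : Set Ω, ∃ b : Option β, A ∈ 𝒜 → A.Nonempty →
      ∃ b', b = some b' ∧ 0 < μ b' A ∧ ∀ c, r c b' → ¬ 0 < μ c A := by
    intro A
    by_cases h : A ∈ 𝒜 ∧ A.Nonempty
    · have hne : {b | 0 < μ b A}.Nonempty := hfull A h.1 h.2
      have wf : WellFounded r := IsWellFounded.wf
      exact ⟨some (wf.min _ hne), fun _ _ => ⟨_, rfl, wf.min_mem _ hne,
        fun c hc hc' => wf.not_lt_min {b | 0 < μ b A} hc' hc⟩⟩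
    · exact ⟨none, fun h1 h2 => absurd ⟨h1, h2⟩ h⟩
  choose f hf using hfirst
  refine ⟨_, isFCP_of_layers h𝒜 (fun A => (f A).elim (fun _ => 0) μ) ?_ ?_, ?_⟩
  · intro A hA hne
    obtain ⟨b, hb, hpos, _⟩ := hf A hA hne
    simp only [hb, Option.elim]
    exact ⟨hμ b, hpos⟩
  · intro A hA B hB hne hBA F hF hFB
    obtain ⟨a, ha, _, hamin⟩ := hf A hA (hne.mono hBA)
    obtain ⟨b, hb, hbpos, hbmin⟩ := hf B hB hne
    simp only [ha, hb, Option.elim]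
    rcases trichotomous_of r a b with hab | rfl | hba
    · have h0 : μ a B = 0 := le_antisymm (not_lt.1 (hbmin a hab)) ((hμ a).1 B hB).1
      have h1 : μ a F = 0 :=
        le_antisymm (((hμ a).mono h𝒜 hF hB hFB).trans h0.le) ((hμ a).1 F hF).1
      rw [h0, h1, zero_mul, zero_mul]
    · exact mul_comm _ _
    · exact absurd (hbpos.trans_le ((hμ b).mono h𝒜 hB hA hBA)) (hamin b hba)
  · intro A hA hne b hb hmin F
    obtain ⟨a, ha, hapos, hamin⟩ := hf A hA hne
    have : a = b := by
      rcases trichotomous_of r a b with hab | h | hba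
      · exact absurd (hmin a hab) hapos.ne'
      · exact h
      · exact absurd hb (hamin b hba)
    simp only [ha, Option.elim, this]

lemma IsFCP.apply_self {P : Set Ω → Set Ω → ℝ} (hP : IsFCP 𝒜 P) (h𝒜 : IsSetField 𝒜)
    {A : Set Ω} (hA : A ∈ 𝒜) (hne : A.Nonempty) : P A A = 1 := by
  have h1 := hP.1 univ h𝒜.1 A hA hne
  rw [univ_inter] at h1
  rw [← h1]
  exact (hP.2.1 A hA hne).2.1

/-- A finitely additive probability can be placed as a new top layer over a full conditional
probability. -/
lemma IsFCP.exists_prepend {P : Set Ω → Set Ω → ℝ} (hP : IsFCP 𝒜 P) (h𝒜 : IsSetField 𝒜)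
    {μ : Set Ω → ℝ} (hμ : IsFAP 𝒜 μ) :
    ∃ Q, IsFCP 𝒜 Q ∧ (∀ A, 0 < μ A → ∀ F, Q F A = μ (F ∩ A) / μ A) ∧
      ∀ A ∈ 𝒜, A.Nonempty → μ A = 0 → ∀ F ∈ 𝒜, Q F A = P F A := by
  have h0 : ∀ A ∈ 𝒜, ¬ 0 < μ A → μ A = 0 := fun A hA h =>
    le_antisymm (not_lt.1 h) (hμ.1 A hA).1
  refine ⟨_, isFCP_of_layers h𝒜 (fun A => if 0 < μ A then μ else fun F => P F A) ?_ ?_,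
    ?_, ?_⟩
  · intro A hA hne
    by_cases h : 0 < μ A
    · simp only [h, if_true]
      exact ⟨hμ, trivial⟩
    · simp only [h, if_false]
      refine ⟨hP.2.1 A hA hne, ?_⟩
      rw [hP.apply_self h𝒜 hA hne]
      exact one_pos
  · intro A hA B hB hne hBA F hF hFB
    by_cases hb : 0 < μ B
    · simp only [hb, hb.trans_le (hμ.mono h𝒜 hB hA hBA), if_true]
      exact mul_comm _ _
    · have hB0 := h0 B hB hb
      by_cases ha : 0 < μ A
      · have hF0 : μ F = 0 :=
          le_antisymm ((hμ.mono h𝒜 hF hB hFB).trans hB0.le) (hμ.1 F hF).1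
        simp only [ha, if_true, hB0, hF0, zero_mul]
      · simp only [ha, hb, if_false]
        have := hP.2.2 B hB F hF A hA (hne.mono hBA) (by rwa [inter_eq_left.2 hBA])
        rw [inter_eq_left.2 hBA, inter_eq_right.2 hFB] at this
        rw [hP.apply_self h𝒜 hB hne, mul_one, this]
  · intro A hA F
    simp only [hA, if_true]
  · intro A hA hne hA0 F hF
    simp only [hA0, lt_irrefl, if_false]
    rw [hP.apply_self h𝒜 hA hne, div_one, ← hP.1 F hF A hA hne]

/-- The `0`-`1` valued finitely additive probability of an ultrafilter. -/
noncomputable def ufProb (U : Ultrafilter Ω) (A : Set Ω) : ℝ := if A ∈ U then 1 else 0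

lemma ufProb_isFAP (U : Ultrafilter Ω) : IsFAP 𝒜 (ufProb U) := by
  refine ⟨fun A _ => ?_, if_pos Filter.univ_mem, fun A _ B _ hAB => ?_⟩
  · unfold ufProb; split_ifs <;> simp
  · have hnot : ¬ (A ∈ U ∧ B ∈ U) := by
      rintro ⟨hA, hB⟩
      have := Filter.inter_mem hA hB
      rw [hAB.inter_eq] at this
      exact U.empty_notMem this
    unfold ufProb
    rw [Ultrafilter.union_mem_iff]
    by_cases hA : A ∈ U <;> by_cases hB : B ∈ U <;> simp_all

end FCP

section Extensions

variable {ι : Type*} {H : ι → Set Ω} {𝒜L 𝒜 : Set (Set Ω)} {π : Set Ω → ℝ} {σ : Set Ω → ι → ℝ}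

/-- Every strategy extends to a full conditional probability: the measures `σ (·|H i)` come
first, followed by all point masses. -/
lemma IsStrategy.exists_fcp (hσ : IsStrategy 𝒜 H σ) (hH : IsPartition H)
    (h𝒜 : IsSetField 𝒜) (hHA : ∀ i, H i ∈ 𝒜) :
    ∃ P, IsFCP 𝒜 P ∧ ∀ F ∈ 𝒜, ∀ i, P F (H i) = σ F i := by
  obtain ⟨P, hP, hval⟩ := exists_fcp_of_family h𝒜
    (Sum.Lex (WellOrderingRel : ι → ι → Prop) (WellOrderingRel : Ω → Ω → Prop))
    (Sum.elim (fun i F => σ F i) fun ω => ufProb (pure ω))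
    (by rintro (i | ω); exacts [(hσ i).1, ufProb_isFAP _])
    (by
      rintro A _ ⟨ω, hω⟩
      exact ⟨Sum.inr ω, by simp [ufProb, hω]⟩)
  refine ⟨P, hP, fun F hF i => ?_⟩
  rw [hval (H i) (hHA i) (hH.1 i) (Sum.inl i)]
  · simp only [Sum.elim_inl]
    rw [hσ.apply_self (hHA i), div_one, hσ.apply_inter h𝒜 (hHA i) hF]
  · simp only [Sum.elim_inl]
    rw [hσ.apply_self (hHA i)]
    exact one_pos
  · rintro (j | ω) hr
    · refine hσ.apply_ne hH h𝒜 (hHA i) ?_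
      rintro rfl
      exact irrefl_of WellOrderingRel i (Sum.lex_inl_inl.1 hr)
    · exact absurd hr Sum.lex_inr_inl

/-- Placing `σ (·|H i)` on top of a full conditional probability that agrees with the strategy
off `H i`. -/
lemma IsStrategy.exists_prepend (hσ : IsStrategy 𝒜 H σ) (hH : IsPartition H)
    (h𝒜 : IsSetField 𝒜) (hHA : ∀ i, H i ∈ 𝒜) (i : ι) {P : Set Ω → Set Ω → ℝ}
    (hP : IsFCP 𝒜 P) (hPσ : ∀ F ∈ 𝒜, ∀ j, j ≠ i → P F (H j) = σ F j) :
    ∃ Q, IsFCP 𝒜 Q ∧ (∀ F ∈ 𝒜, ∀ j, Q F (H j) = σ F j) ∧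
      (∀ A, 0 < σ A i → ∀ F, Q F A = σ (F ∩ A) i / σ A i) ∧
      ∀ A ∈ 𝒜, A.Nonempty → σ A i = 0 → ∀ F ∈ 𝒜, Q F A = P F A := by
  obtain ⟨Q, hQ, hpos, hzero⟩ := hP.exists_prepend h𝒜 (hσ i).1
  refine ⟨Q, hQ, fun F hF j => ?_, hpos, hzero⟩
  have h1 := hσ.apply_self (hHA i)
  by_cases hji : j = i
  · subst hji
    rw [hpos _ (by simp only [h1]; exact one_pos)]
    simp only [h1]
    rw [div_one, hσ.apply_inter h𝒜 (hHA _) hF]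
  · rw [hzero _ (hHA j) (hH.1 j) (hσ.apply_ne hH h𝒜 (hHA j) hji) F hF, hPσ F hF j hji]

/-- Placing the joint probability on top of any full conditional extension of the strategy
gives an element of `𝒫^d`, unchanged on events null for the joint probability. -/
lemma exists_mem_PdSet [Nonempty Ω] (hH : IsPartition H) (hL : IsFieldOver H 𝒜L)
    (h𝒜 : IsSetField 𝒜) (hsub : 𝒜L ⊆ 𝒜) (hπ : IsFAP 𝒜L π) (hσ : IsStrategy 𝒜 H σ)
    (hcont : ∀ F ∈ 𝒜, ALContinuous H 𝒜L fun i => σ F i) {Q : Set Ω → Set Ω → ℝ}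
    (hQ : IsFCP 𝒜 Q) (hQσ : ∀ F ∈ 𝒜, ∀ i, Q F (H i) = σ F i) :
    ∃ P ∈ PdSet 𝒜 𝒜L H π σ, ∀ A ∈ 𝒜, A.Nonempty → jointPd H 𝒜L π σ A = 0 →
      ∀ F ∈ 𝒜, P F A = Q F A := by
  have hPd := jointPd_isFAP hH hL h𝒜 hπ hσ hcont
  have hHA := fun i => hsub (hL.2.1 i)
  obtain ⟨P, hP, hpos, hzero⟩ := hQ.exists_prepend h𝒜 hPd
  refine ⟨P, ⟨hP, fun F hF => ?_, fun F hF i => ?_⟩, hzero⟩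
  · rw [hpos univ (by rw [hPd.2.1]; exact one_pos), inter_univ, hPd.2.1, div_one]
  · rcases (hPd.1 _ (hHA i)).1.eq_or_lt with h0 | h0
    · rw [hzero _ (hHA i) (hH.1 i) h0.symm F hF, hQσ F hF i]
    · rw [hpos _ h0, jointPd_inter hH hL h𝒜 hsub hπ hσ hcont hF, mul_div_cancel_right₀ _ h0.ne']

lemma lowEnv_eq {Ps : Set (Set Ω → Set Ω → ℝ)} {F K : Set Ω} {c : ℝ}
    (hmem : ∃ P ∈ Ps, P F K = c) (hle : ∀ P ∈ Ps, c ≤ P F K) : lowEnv Ps F K = c := by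
  obtain ⟨P, hP, hPc⟩ := hmem
  exact IsLeast.csInf_eq ⟨⟨P, hP, hPc⟩, by rintro _ ⟨Q, hQ, rfl⟩; exact hle Q hQ⟩

/-- A set meeting infinitely many members of the partition is charged by an ultrafilter that
avoids every member. -/
lemma exists_ultrafilter_avoiding (hH : IsPartition H) {G : Set Ω}
    (hG : {i | (H i ∩ G).Nonempty}.Infinite) : ∃ U : Ultrafilter Ω, G ∈ U ∧ ∀ j, H j ∉ U := by
  have : Infinite {i | (H i ∩ G).Nonempty} := hG.to_subtype
  choose w hw using fun i : {i | (H i ∩ G).Nonempty} => i.2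
  refine ⟨(Filter.hyperfilter {i | (H i ∩ G).Nonempty}).map w, ?_, fun j hj => ?_⟩
  · rw [Ultrafilter.mem_map]
    exact Filter.univ_mem' fun i => (hw i).2
  · rw [Ultrafilter.mem_map] at hj
    refine Set.Finite.notMem_hyperfilter ?_ hj
    refine Set.Subsingleton.finite fun a ha b hb => Subtype.ext ?_
    exact (hH.eq_of_mem (hw a).1 ha).trans (hH.eq_of_mem hb (hw b).1)

/-- If `Fᶜ ∩ K` is covered by finitely many `H i`, each with `σ (K|H i) > 0`, then `F` given
`K` is at least every common lower bound of the ratios `σ (F ∩ K|H i) / σ (K|H i)`. -/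
lemma le_of_mem_PdSet (hH : IsPartition H) (h𝒜 : IsSetField 𝒜) (hHA : ∀ i, H i ∈ 𝒜)
    {P : Set Ω → Set Ω → ℝ} (hP : IsFCP 𝒜 P) (hPσ : ∀ F ∈ 𝒜, ∀ i, P F (H i) = σ F i)
    {F K : Set Ω} (hF : F ∈ 𝒜) (hK : K ∈ 𝒜) (hKne : K.Nonempty) (I : Finset ι)
    (hI : ∀ i ∈ I, (H i ∩ K).Nonempty) (hcov : ∀ ω ∈ K, ω ∉ F → ∃ i ∈ I, ω ∈ H i)
    {c : ℝ} (hc1 : c ≤ 1) (hpos : ∀ i ∈ I, 0 < σ K i)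
    (hc : ∀ i ∈ I, c ≤ σ (F ∩ K) i / σ K i) : c ≤ P F K := by
  have hfap := hP.2.1 K hK hKne
  have hFc := h𝒜.2.1 _ hF
  set T : Finset (Set Ω) := I.image H with hT
  have hTA : (↑T : Set (Set Ω)) ⊆ 𝒜 := by
    intro A hA
    obtain ⟨i, _, rfl⟩ := Finset.mem_image.1 hA
    exact hHA i
  have hTd : ∀ A ∈ T, ∀ B ∈ T, A ≠ B → Disjoint A B := by
    intro A hA B hB hne
    obtain ⟨i, _, rfl⟩ := Finset.mem_image.1 hA
    obtain ⟨j, _, rfl⟩ := Finset.mem_image.1 hB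
    exact hH.2.1 fun h => hne (by rw [h])
  have hcell : ∀ A ∈ T, P (Fᶜ ∩ A) K ≤ (1 - c) * P A K := by
    intro A hA
    obtain ⟨i, hi, rfl⟩ := Finset.mem_image.1 hA
    have h1 := hP.2.2 (H i) (hHA i) F hF K hK hKne (hI i hi)
    have h2 := hP.2.2 K hK F hF (H i) (hHA i) (hH.1 i) (by rw [inter_comm]; exact hI i hi)
    rw [hPσ _ (h𝒜.inter hK hF), hPσ K hK, inter_comm K F, inter_comm K (H i)] at h2
    have h3 : c ≤ P F (H i ∩ K) := by
      have := hc i hi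
      rwa [h2, mul_div_cancel_left₀ _ (hpos i hi).ne'] at this
    have h4 := hfap.inter_add_compl h𝒜 hF (hHA i)
    have h5 := (hfap.1 _ (hHA i)).1
    simp only at h4 h5
    rw [inter_comm F, h1] at h4
    nlinarith
  have hFcK : P Fᶜ K = ∑ A ∈ T, P (Fᶜ ∩ A) K := by
    rw [← hfap.inter_sUnion h𝒜 hFc T hTA hTd, hP.1 _ hFc K hK hKne,
      hP.1 _ (h𝒜.inter hFc (h𝒜.sUnion T hTA)) K hK hKne]
    congr 1
    ext ω
    simp only [mem_inter_iff, mem_compl_iff, mem_sUnion]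
    refine ⟨fun ⟨h1, h2⟩ => ⟨⟨h1, ?_⟩, h2⟩, fun ⟨⟨h1, _⟩, h2⟩ => ⟨h1, h2⟩⟩
    obtain ⟨i, hi, hω⟩ := hcov ω h2 h1
    exact ⟨H i, Finset.mem_image_of_mem _ hi, hω⟩
  have htot : ∑ A ∈ T, P A K ≤ 1 := by
    have h1 := hfap.inter_sUnion h𝒜 h𝒜.1 T hTA hTd
    simp only [univ_inter] at h1
    rw [← h1]
    exact (hfap.1 _ (h𝒜.sUnion T hTA)).2
  have h1 : P Fᶜ K ≤ (1 - c) * ∑ A ∈ T, P A K := by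
    rw [hFcK, Finset.mul_sum]
    exact Finset.sum_le_sum hcell
  have h2 := hfap.add_compl h𝒜 hF
  nlinarith

end Extensions

/-- closed form of the lower envelope `P^d_*` of the extensions of
`{P^d, σ}`. -/
theorem statement5 {Ω ι κ : Type*} [Nonempty Ω] (H : ι → Set Ω) (E : κ → Set Ω)
    (𝒜L 𝒜E 𝒜 : Set (Set Ω))
    (hH : IsPartition H) (hE : IsPartition E)
    (h𝒜L : IsFieldOver H 𝒜L) (h𝒜E : IsFieldOver E 𝒜E)
    (h𝒜 : IsJointField H E 𝒜L 𝒜E 𝒜)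
    (π : Set Ω → ℝ) (hπ : IsFAP 𝒜L π)
    (σ : Set Ω → ι → ℝ) (hσ : IsStrategy 𝒜 H σ)
    (hcont : ∀ F ∈ 𝒜, ALContinuous H 𝒜L fun i => σ F i)
    (F K : Set Ω) (hF : F ∈ 𝒜) (hK : K ∈ 𝒜) (hKne : K.Nonempty) :
    (F ∩ K = K → lowEnv (PdSet 𝒜 𝒜L H π σ) F K = 1) ∧
    (F ∩ K ≠ K → 0 < jointPd H 𝒜L π σ K →
      lowEnv (PdSet 𝒜 𝒜L H π σ) F K =
        jointPd H 𝒜L π σ (F ∩ K) / jointPd H 𝒜L π σ K) ∧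
    (F ∩ K ≠ K → jointPd H 𝒜L π σ K = 0 →
      (({i | (H i ∩ F ∩ K).Nonempty ∧ (H i ∩ Fᶜ ∩ K).Nonempty}.Nonempty ∧
        {i | H i ∩ F ∩ K = ∅ ∧ (H i ∩ Fᶜ ∩ K).Nonempty} = ∅ ∧
        {i | (H i ∩ F ∩ K).Nonempty ∧ (H i ∩ Fᶜ ∩ K).Nonempty}.Finite ∧
        ∀ i ∈ {i | (H i ∩ F ∩ K).Nonempty ∧ (H i ∩ Fᶜ ∩ K).Nonempty}, 0 < σ K i) →
        lowEnv (PdSet 𝒜 𝒜L H π σ) F K =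
          sInf ((fun i => σ (F ∩ K) i / σ K i) ''
            {i | (H i ∩ F ∩ K).Nonempty ∧ (H i ∩ Fᶜ ∩ K).Nonempty})) ∧
      (¬({i | (H i ∩ F ∩ K).Nonempty ∧ (H i ∩ Fᶜ ∩ K).Nonempty}.Nonempty ∧
        {i | H i ∩ F ∩ K = ∅ ∧ (H i ∩ Fᶜ ∩ K).Nonempty} = ∅ ∧
        {i | (H i ∩ F ∩ K).Nonempty ∧ (H i ∩ Fᶜ ∩ K).Nonempty}.Finite ∧
        ∀ i ∈ {i | (H i ∩ F ∩ K).Nonempty ∧ (H i ∩ Fᶜ ∩ K).Nonempty}, 0 < σ K i) →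
        lowEnv (PdSet 𝒜 𝒜L H π σ) F K = 0)) := by
  have hA := h𝒜.1
  have hsub := h𝒜.2.1
  have hHA := fun i => hsub (h𝒜L.2.1 i)
  have hFK := hA.inter hF hK
  have hPd := jointPd_isFAP hH h𝒜L hA hπ hσ hcont
  obtain ⟨Q₀, hQ₀, hQ₀σ⟩ := hσ.exists_fcp hH hA hHA
  -- an extension `Q` of the strategy realises its value at `F|K` inside `𝒫^d` when `K` is null
  have realise : jointPd H 𝒜L π σ K = 0 → ∀ Q, IsFCP 𝒜 Q →
      (∀ F ∈ 𝒜, ∀ i, Q F (H i) = σ F i) → ∃ P ∈ PdSet 𝒜 𝒜L H π σ, P F K = Q F K := by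
    intro h0 Q hQ hQσ
    obtain ⟨P, hP, hPQ⟩ := exists_mem_PdSet hH h𝒜L hA hsub hπ hσ hcont hQ hQσ
    exact ⟨P, hP, hPQ K hK hKne h0 F hF⟩
  have real_ratio : jointPd H 𝒜L π σ K = 0 → ∀ i, 0 < σ K i →
      ∃ P ∈ PdSet 𝒜 𝒜L H π σ, P F K = σ (F ∩ K) i / σ K i := by
    intro h0 i hi
    obtain ⟨Q, hQ, hQσ, hpos, _⟩ :=
      hσ.exists_prepend hH hA hHA i hQ₀ fun F hF j _ => hQ₀σ F hF j
    rw [← hpos K hi F]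
    exact realise h0 Q hQ hQσ
  have nonneg : ∀ P ∈ PdSet 𝒜 𝒜L H π σ, 0 ≤ P F K := fun P hP =>
    ((hP.1.2.1 K hK hKne).1 F hF).1
  refine ⟨fun hFKK => ?_, fun _ hpos => ?_, fun hne h0 => ⟨?_, fun hnot => ?_⟩⟩
  · have hval : ∀ P ∈ PdSet 𝒜 𝒜L H π σ, P F K = 1 := fun P hP => by
      rw [hP.1.1 F hF K hK hKne, hFKK, hP.1.apply_self hA hK hKne]
    obtain ⟨P, hP, _⟩ := exists_mem_PdSet hH h𝒜L hA hsub hπ hσ hcont hQ₀ hQ₀σ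
    exact lowEnv_eq ⟨P, hP, hval P hP⟩ fun P hP => (hval P hP).ge
  · have hval : ∀ P ∈ PdSet 𝒜 𝒜L H π σ,
        P F K = jointPd H 𝒜L π σ (F ∩ K) / jointPd H 𝒜L π σ K := fun P hP => by
      have := hP.1.2.2 K hK F hF univ hA.1 univ_nonempty (by rwa [inter_univ])
      rw [inter_univ, hP.2.1 K hK, inter_comm, hP.2.1 _ hFK] at this
      rw [this, mul_div_cancel_left₀ _ hpos.ne']
    obtain ⟨P, hP, _⟩ := exists_mem_PdSet hH h𝒜L hA hsub hπ hσ hcont hQ₀ hQ₀σ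
    exact lowEnv_eq ⟨P, hP, hval P hP⟩ fun P hP => (hval P hP).ge
  · rintro ⟨hI₂, hI₃, hfin, hpos⟩
    set I₂ := {i | (H i ∩ F ∩ K).Nonempty ∧ (H i ∩ Fᶜ ∩ K).Nonempty} with hI₂def
    have hleast := (hfin.image fun i => σ (F ∩ K) i / σ K i)
    obtain ⟨i₀, hi₀, hmin⟩ := (hI₂.image fun i => σ (F ∩ K) i / σ K i).csInf_mem hleast
    have hle : ∀ i ∈ I₂, sInf ((fun i => σ (F ∩ K) i / σ K i) '' I₂) ≤
        σ (F ∩ K) i / σ K i := fun i hi => csInf_le hleast.bddBelow ⟨i, hi, rfl⟩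
    refine lowEnv_eq ?_ fun P hP => ?_
    · rw [← hmin]
      exact real_ratio h0 i₀ (hpos i₀ hi₀)
    · refine le_of_mem_PdSet hH hA hHA hP.1 hP.2.2 hF hK hKne hfin.toFinset ?_ ?_ ?_ ?_ ?_
      · intro i hi
        obtain ⟨ω, ⟨h1, _⟩, h2⟩ := (hfin.mem_toFinset.1 hi).1
        exact ⟨ω, h1, h2⟩
      · intro ω hωK hωF
        obtain ⟨i, hi⟩ := hH.exists_mem ω
        have hc : (H i ∩ Fᶜ ∩ K).Nonempty := ⟨ω, ⟨hi, hωF⟩, hωK⟩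
        refine ⟨i, hfin.mem_toFinset.2 ⟨?_, hc⟩, hi⟩
        by_contra hemp
        have : i ∈ {i | H i ∩ F ∩ K = ∅ ∧ (H i ∩ Fᶜ ∩ K).Nonempty} :=
          ⟨not_nonempty_iff_eq_empty.1 hemp, hc⟩
        rw [hI₃] at this
        exact this
      · refine (hle i₀ hi₀).trans ?_
        rw [div_le_one (hpos i₀ hi₀)]
        exact (hσ i₀).1.mono hA hFK hK inter_subset_right
      · exact fun i hi => hpos i (hfin.mem_toFinset.1 hi)
      · exact fun i hi => hle i (hfin.mem_toFinset.1 hi)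
  · -- it remains to exhibit, in each of the other cases, one extension vanishing at `F|K`
    suffices h : ∃ P ∈ PdSet 𝒜 𝒜L H π σ, P F K = 0 from lowEnv_eq h nonneg
    have real_null : ∀ U : Ultrafilter Ω, Fᶜ ∩ K ∈ U → ufProb U K = 1 ∧ ufProb U (F ∩ K) = 0 := by
      intro U hU
      refine ⟨if_pos (Filter.mem_of_superset hU inter_subset_right), if_neg fun h => ?_⟩
      have := Filter.inter_mem hU h
      rw [show Fᶜ ∩ K ∩ (F ∩ K) = ∅ by ext; simp; tauto] at this
      exact U.empty_notMem this
    -- a cell where `K` is `σ`-null: a point mass in `Fᶜ ∩ K` goes right below `σ (·|H i)`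
    have null_cell : ∀ i, (H i ∩ Fᶜ ∩ K).Nonempty → σ K i = 0 →
        ∃ P ∈ PdSet 𝒜 𝒜L H π σ, P F K = 0 := by
      rintro i ⟨ω, ⟨hωi, hωF⟩, hωK⟩ hi0
      obtain ⟨h1, h2⟩ := real_null (pure ω) ⟨hωF, hωK⟩
      obtain ⟨R, hR, hRpos, hRzero⟩ := hQ₀.exists_prepend hA (ufProb_isFAP (pure ω))
      obtain ⟨Q, hQ, hQσ, _, hQzero⟩ := hσ.exists_prepend hH hA hHA i hR (by
        intro G hG j hji
        rw [hRzero _ (hHA j) (hH.1 j) (if_neg fun h => hji (hH.eq_of_mem h hωi)) G hG,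
          hQ₀σ G hG j])
      have hval : Q F K = 0 := by
        rw [hQzero K hK hKne hi0 F hF, hRpos K (by rw [h1]; exact one_pos), h2, zero_div]
      rw [← hval]
      exact realise h0 Q hQ hQσ
    by_cases hI₃ : {i | H i ∩ F ∩ K = ∅ ∧ (H i ∩ Fᶜ ∩ K).Nonempty} = ∅
    · have hI₂ : ∀ i, (H i ∩ Fᶜ ∩ K).Nonempty →
          i ∈ {i | (H i ∩ F ∩ K).Nonempty ∧ (H i ∩ Fᶜ ∩ K).Nonempty} := by
        intro i hi
        refine ⟨?_, hi⟩
        by_contra hemp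
        exact (eq_empty_iff_forall_notMem.1 hI₃ i) ⟨not_nonempty_iff_eq_empty.1 hemp, hi⟩
      by_cases hpos : ∀ i ∈ {i | (H i ∩ F ∩ K).Nonempty ∧ (H i ∩ Fᶜ ∩ K).Nonempty}, 0 < σ K i
      · have hne' : ∃ ω ∈ K, ω ∉ F := by
          by_contra! hcon
          exact hne (inter_eq_right.2 hcon)
        obtain ⟨ω, hωK, hωF⟩ := hne'
        obtain ⟨i, hi⟩ := hH.exists_mem ω
        have hinf : {i | (H i ∩ (Fᶜ ∩ K)).Nonempty}.Infinite := by
          intro hfin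
          refine hnot ⟨⟨i, hI₂ i ⟨ω, ⟨hi, hωF⟩, hωK⟩⟩, hI₃, hfin.subset ?_, hpos⟩
          rintro j ⟨_, hj⟩
          rwa [inter_assoc] at hj
        obtain ⟨U, hU, hUH⟩ := exists_ultrafilter_avoiding hH hinf
        obtain ⟨h1, h2⟩ := real_null U hU
        obtain ⟨Q, hQ, hQpos, hQzero⟩ := hQ₀.exists_prepend hA (ufProb_isFAP U)
        have hval : Q F K = 0 := by
          rw [hQpos K (by rw [h1]; exact one_pos), h2, zero_div]
        rw [← hval]
        refine realise h0 Q hQ fun G hG j => ?_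
        rw [hQzero _ (hHA j) (hH.1 j) (if_neg (hUH j)) G hG, hQ₀σ G hG j]
      · push Not at hpos
        obtain ⟨i, hi, hi0⟩ := hpos
        exact null_cell i hi.2 (le_antisymm hi0 ((hσ i).1.1 K hK).1)
    · obtain ⟨i, hi, hi'⟩ := nonempty_iff_ne_empty.2 hI₃
      rcases ((hσ i).1.1 K hK).1.eq_or_lt with hi0 | hi0
      · exact null_cell i hi' hi0.symm
      · have hz : σ (F ∩ K) i = 0 := by
          rw [← hσ.apply_inter hA (hHA i) hFK, show F ∩ K ∩ H i = ∅ by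
            rw [← hi]; ext; simp; tauto]
          exact (hσ i).1.empty hA
        have := real_ratio h0 i hi0
        rwa [hz, zero_div] at this
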